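/- arXiv:0902.2514 — 2 statements merged into one kernel-verified Lean document; each statement's English description precedes it below -/
import Mathlib

section
/- For every real number s with 0 < s < 1 and every real number x > 0, the double inequality (x + s/2)^{1-s} < Γ(x+1)/Γ(x+s) < (x - 1/2 + √(s + 1/4))^{1-s} holds (Kershaw's first double inequality), where Γ denotes Euler's gamma function. -/
open Real

open Filter Set Topology

/-!
For a fixed shift `c`, the defect `D x = log Γ(x + 1) - log Γ(x + s) - (1 - s) log (x + c)` tends to
`0` at infinity, by log-convexity of `Γ`. The functional equation of `Γ` makes `D x - D (x + 1)`
elementary, with derivative `(1 - s) (1 / ((x + s) (x + 1)) - 1 / ((x + c) (x + c + 1)))`. If this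
derivative is negative then `D x - D (x + 1)` decreases to `0`, hence is positive; so `D` decreases
along unit steps to `0`, hence is positive too. A positive derivative gives `D < 0` in the same way.

The two quadratics `(x + s) (x + 1)` and `(x + c) (x + c + 1)` differ by an affine function of `x`:
`c = s / 2` makes their linear coefficients agree, and `c = -1 / 2 + √(s + 1 / 4)` their constant
terms. These are the two choices in Kershaw's inequality.
-/

section UnitSteps

variable {R : Type*} [Ring R] [PartialOrder R] [IsOrderedRing R] [Archimedean R]

theorem lt_of_tendsto_of_forall_add_one_lt {α : Type*} [TopologicalSpace α] [Preorder α]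
    [OrderClosedTopology α] {f : R → α} {a : R} {l : α} (hf : ∀ x ≥ a, f (x + 1) < f x)
    (hl : Tendsto f atTop (𝓝 l)) : l < f a := by
  have hanti : StrictAnti fun n : ℕ => f (a + n) := strictAnti_nat_of_succ_lt fun n => by
    simpa only [Nat.cast_succ, add_assoc] using hf (a + n) (le_add_of_nonneg_right n.cast_nonneg)
  have hlim : Tendsto (fun n : ℕ => f (a + n)) atTop (𝓝 l) :=
    hl.comp (tendsto_atTop_add_const_left _ a tendsto_natCast_atTop_atTop)
  calc l ≤ f (a + (1 : ℕ)) := hanti.antitone.le_of_tendsto hlim 1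
    _ < f a := by simpa only [Nat.cast_one] using hf a le_rfl

variable [Nontrivial R] {G : Type*} [AddCommGroup G] [PartialOrder G] [IsOrderedAddMonoid G]
  [TopologicalSpace G] [IsTopologicalAddGroup G] [OrderClosedTopology G] {f : R → G} {a : R} {l : G}

theorem lt_of_strictAntiOn_sub_add_one (hf : StrictAntiOn (fun x => f x - f (x + 1)) (Ici a))
    (hl : Tendsto f atTop (𝓝 l)) : l < f a := by
  have hdecr : Tendsto (fun x => f x - f (x + 1)) atTop (𝓝 0) := by
    simpa only [sub_self, Function.comp_def, id_eq] using
      hl.sub (hl.comp (tendsto_atTop_add_const_right _ 1 tendsto_id))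
  refine lt_of_tendsto_of_forall_add_one_lt (fun x hx => sub_pos.1 ?_) hl
  refine lt_of_tendsto_of_forall_add_one_lt (f := fun y => f y - f (y + 1)) (fun y hy => ?_) hdecr
  have hay : a ≤ y := le_trans hx hy
  exact hf hay (hay.trans (lt_add_one y).le) (lt_add_one y)

theorem lt_of_strictMonoOn_sub_add_one (hf : StrictMonoOn (fun x => f x - f (x + 1)) (Ici a))
    (hl : Tendsto f atTop (𝓝 l)) : f a < l := by
  have hneg : StrictAntiOn (fun x => -f x - -f (x + 1)) (Ici a) := by
    simpa only [neg_sub_neg, neg_sub] using hf.neg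
  exact neg_lt_neg_iff.1 (lt_of_strictAntiOn_sub_add_one (f := fun x => -f x) hneg hl.neg)

end UnitSteps

theorem tendsto_log_add_sub_log_add (a b : ℝ) :
    Tendsto (fun x => log (x + a) - log (x + b)) atTop (𝓝 0) := by
  simpa only [sub_sub_sub_cancel_right, sub_zero] using
    (tendsto_log_comp_add_sub_log a).sub (tendsto_log_comp_add_sub_log b)

theorem log_Gamma_add_one {x : ℝ} (hx : 0 < x) :
    log (Gamma (x + 1)) = log x + log (Gamma x) := by
  rw [Gamma_add_one hx.ne', log_mul hx.ne' (Gamma_pos_of_pos hx).ne']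

theorem log_Gamma_add_le {s x : ℝ} (hs0 : 0 ≤ s) (hs1 : s ≤ 1) (hx : 0 < x) :
    log (Gamma (x + s)) ≤ log (Gamma x) + s * log x := by
  have hconv := convexOn_log_Gamma.2 (mem_Ioi.2 hx) (mem_Ioi.2 (add_pos hx one_pos))
    (sub_nonneg.2 hs1) hs0 (sub_add_cancel 1 s)
  simp only [smul_eq_mul, Function.comp_apply, log_Gamma_add_one hx] at hconv
  rw [show (1 - s) * x + s * (x + 1) = x + s by ring] at hconv
  linarith

/-- The logarithm of `Γ(x + 1) / Γ(x + s)` divided by `(x + c) ^ (1 - s)`, whose sign decides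
whether `(x + c) ^ (1 - s)` is a lower or an upper bound for the quotient of Gamma values. -/
noncomputable def logGammaDefect (s c x : ℝ) : ℝ :=
  log (Gamma (x + 1)) - log (Gamma (x + s)) - (1 - s) * log (x + c)

section LogGammaDefect

variable {s c x : ℝ}

theorem logGammaDefect_eq_log_sub_log (hs : 0 < x + s) (h1 : 0 < x + 1) (hc : 0 < x + c) :
    logGammaDefect s c x = log (Gamma (x + 1) / Gamma (x + s)) - log ((x + c) ^ (1 - s)) := by
  rw [log_div (Gamma_pos_of_pos h1).ne' (Gamma_pos_of_pos hs).ne', log_rpow hc, logGammaDefect]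

theorem logGammaDefect_pos_iff (hs : 0 < x + s) (h1 : 0 < x + 1) (hc : 0 < x + c) :
    0 < logGammaDefect s c x ↔ (x + c) ^ (1 - s) < Gamma (x + 1) / Gamma (x + s) := by
  rw [logGammaDefect_eq_log_sub_log hs h1 hc, sub_pos, log_lt_log_iff (rpow_pos_of_pos hc _)
    (div_pos (Gamma_pos_of_pos h1) (Gamma_pos_of_pos hs))]

theorem logGammaDefect_neg_iff (hs : 0 < x + s) (h1 : 0 < x + 1) (hc : 0 < x + c) :
    logGammaDefect s c x < 0 ↔ Gamma (x + 1) / Gamma (x + s) < (x + c) ^ (1 - s) := by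
  rw [logGammaDefect_eq_log_sub_log hs h1 hc, sub_neg, log_lt_log_iff
    (div_pos (Gamma_pos_of_pos h1) (Gamma_pos_of_pos hs)) (rpow_pos_of_pos hc _)]

theorem tendsto_logGammaDefect (hs0 : 0 ≤ s) (hs1 : s ≤ 1) (c : ℝ) :
    Tendsto (logGammaDefect s c) atTop (𝓝 0) := by
  have hbound (a : ℝ) : Tendsto (fun x => (1 - s) * (log (x + a) - log (x + c))) atTop (𝓝 0) := by
    simpa only [mul_zero] using (tendsto_log_add_sub_log_add a c).const_mul (1 - s)
  refine tendsto_of_tendsto_of_tendsto_of_le_of_le' (hbound 0) (hbound s) ?_ ?_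
  · filter_upwards [eventually_gt_atTop 0] with x hx
    have hlower := log_Gamma_add_le hs0 hs1 hx
    rw [logGammaDefect, log_Gamma_add_one hx, add_zero]
    linarith
  · filter_upwards [eventually_gt_atTop 0] with x hx
    have hupper := log_Gamma_add_le (sub_nonneg.2 hs1) (sub_le_self 1 hs0)
      (add_pos_of_pos_of_nonneg hx hs0)
    rw [add_add_sub_cancel] at hupper
    rw [logGammaDefect]
    linarith

theorem logGammaDefect_sub_add_one (hs : 0 < x + s) (h1 : 0 < x + 1) :
    logGammaDefect s c x - logGammaDefect s c (x + 1) =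
      log (x + s) - log (x + 1) + (1 - s) * (log (x + (c + 1)) - log (x + c)) := by
  rw [logGammaDefect, logGammaDefect, log_Gamma_add_one h1, add_right_comm x 1 s,
    log_Gamma_add_one hs, add_assoc x 1 c, add_comm 1 c]
  ring

theorem hasDerivAt_logGammaDefect_sub_add_one (hs : 0 < x + s) (h1 : 0 < x + 1) (hc : 0 < x + c) :
    HasDerivAt (fun y => logGammaDefect s c y - logGammaDefect s c (y + 1))
      ((1 - s) * (((x + s) * (x + 1))⁻¹ - ((x + c) * (x + (c + 1)))⁻¹)) x := by
  have hc1 : 0 < x + (c + 1) := by linarith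
  have hlog {a : ℝ} (ha : 0 < x + a) : HasDerivAt (fun y => log (y + a)) (x + a)⁻¹ x := by
    simpa only [one_div] using ((hasDerivAt_id' x).add_const a).log ha.ne'
  have hclosed := ((hlog hs).sub (hlog h1)).add (((hlog hc1).sub (hlog hc)).const_mul (1 - s))
  have heq : (fun y => logGammaDefect s c y - logGammaDefect s c (y + 1)) =ᶠ[𝓝 x]
      fun y => log (y + s) - log (y + 1) + (1 - s) * (log (y + (c + 1)) - log (y + c)) := by
    filter_upwards [lt_mem_nhds (neg_lt_iff_pos_add.2 hs),
      lt_mem_nhds (neg_lt_iff_pos_add.2 h1)] with y hys hy1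
    exact logGammaDefect_sub_add_one (neg_lt_iff_pos_add.1 hys) (neg_lt_iff_pos_add.1 hy1)
  refine (hclosed.congr_of_eventuallyEq heq).congr_deriv ?_
  field_simp
  ring

theorem logGammaDefect_pos (hs0 : 0 ≤ s) (hs1 : s < 1) (hs : 0 < x + s) (hc : 0 < x + c)
    (h : ∀ y > x, (y + c) * (y + (c + 1)) < (y + s) * (y + 1)) : 0 < logGammaDefect s c x := by
  have hderiv (y) (hy : x ≤ y) := hasDerivAt_logGammaDefect_sub_add_one (s := s) (c := c)
    (x := y) (by linarith) (by linarith) (by linarith)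
  refine lt_of_strictAntiOn_sub_add_one (strictAntiOn_of_deriv_neg (convex_Ici x)
    (fun y hy => (hderiv y hy).continuousAt.continuousWithinAt) fun y hy => ?_)
    (tendsto_logGammaDefect hs0 hs1.le c)
  rw [interior_Ici, mem_Ioi] at hy
  have hden : 0 < (y + c) * (y + (c + 1)) := mul_pos (by linarith) (by linarith)
  rw [(hderiv y hy.le).deriv]
  exact mul_neg_of_pos_of_neg (sub_pos.2 hs1) (sub_neg.2 (inv_strictAnti₀ hden (h y hy)))

theorem logGammaDefect_neg (hs0 : 0 ≤ s) (hs1 : s < 1) (hs : 0 < x + s) (hc : 0 < x + c)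
    (h : ∀ y > x, (y + s) * (y + 1) < (y + c) * (y + (c + 1))) : logGammaDefect s c x < 0 := by
  have hderiv (y) (hy : x ≤ y) := hasDerivAt_logGammaDefect_sub_add_one (s := s) (c := c)
    (x := y) (by linarith) (by linarith) (by linarith)
  refine lt_of_strictMonoOn_sub_add_one (strictMonoOn_of_deriv_pos (convex_Ici x)
    (fun y hy => (hderiv y hy).continuousAt.continuousWithinAt) fun y hy => ?_)
    (tendsto_logGammaDefect hs0 hs1.le c)
  rw [interior_Ici, mem_Ioi] at hy
  have hden : 0 < (y + s) * (y + 1) := mul_pos (by linarith) (by linarith)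
  rw [(hderiv y hy.le).deriv]
  exact mul_pos (sub_pos.2 hs1) (sub_pos.2 (inv_strictAnti₀ hden (h y hy)))

end LogGammaDefect

section Kershaw

variable {s x : ℝ}

theorem add_half_rpow_lt_Gamma_add_one_div_Gamma_add (hs0 : 0 < s) (hs1 : s < 1)
    (hx : 0 < x + s / 2) : (x + s / 2) ^ (1 - s) < Gamma (x + 1) / Gamma (x + s) := by
  have hxs : 0 < x + s := by linarith
  refine (logGammaDefect_pos_iff hxs (by linarith) hx).1
    (logGammaDefect_pos hs0.le hs1 hxs hx fun y _ => ?_)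
  have hconst : s / 2 * (s / 2 + 1) < s := by nlinarith
  linear_combination hconst

theorem Gamma_add_one_div_Gamma_add_lt_sub_half_add_sqrt_rpow (hs0 : 0 < s) (hs1 : s < 1)
    (hx : 0 ≤ x) : Gamma (x + 1) / Gamma (x + s) < (x - 1 / 2 + √(s + 1 / 4)) ^ (1 - s) := by
  obtain ⟨c, hsqrt⟩ : ∃ c, √(s + 1 / 4) = c + 1 / 2 := ⟨√(s + 1 / 4) - 1 / 2, by ring⟩
  have hconst : c * (c + 1) = s := by
    have hsq : (c + 1 / 2) ^ 2 = s + 1 / 4 := hsqrt ▸ sq_sqrt (by positivity)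
    linear_combination hsq
  have hlin : s < 2 * c := by
    have hlt : (s + 1) / 2 < c + 1 / 2 := hsqrt ▸ lt_sqrt_of_sq_lt (by nlinarith)
    linarith
  have hxs : 0 < x + s := by linarith
  have hxc : 0 < x + c := by linarith
  rw [show x - 1 / 2 + √(s + 1 / 4) = x + c by rw [hsqrt]; ring]
  refine (logGammaDefect_neg_iff hxs (by linarith) hxc).1
    (logGammaDefect_neg hs0.le hs1 hxs hxc fun y hy => ?_)
  have hy0 : 0 < y := hx.trans_lt hy
  linear_combination y * hlin - hconst

end Kershaw

theorem kershaw_first_double_inequality_general (s x : ℝ) (hs0 : 0 < s) (hs1 : s < 1) :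
    (0 < x + s / 2 → (x + s / 2) ^ (1 - s) < Gamma (x + 1) / Gamma (x + s)) ∧
      (0 ≤ x → Gamma (x + 1) / Gamma (x + s) < (x - 1 / 2 + √(s + 1 / 4)) ^ (1 - s)) :=
  ⟨add_half_rpow_lt_Gamma_add_one_div_Gamma_add hs0 hs1,
    Gamma_add_one_div_Gamma_add_lt_sub_half_add_sqrt_rpow hs0 hs1⟩

theorem kershaw_first_double_inequality (s x : ℝ) (hs0 : 0 < s) (hs1 : s < 1) (hx : 0 < x) :
    (x + s / 2) ^ (1 - s) < Gamma (x + 1) / Gamma (x + s) ∧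
      Gamma (x + 1) / Gamma (x + s) < (x - 1 / 2 + Real.sqrt (s + 1 / 4)) ^ (1 - s) :=
  (kershaw_first_double_inequality_general s x hs0 hs1).imp (· (by positivity)) (· hx.le)
end

section
/- Let s and t be real numbers with α = min{s, t}, and define Δ_{s,t}(x) = ((ψ(x+t) - ψ(x+s))/(t-s))² + (ψ'(x+t) - ψ'(x+s))/(t-s) when s ≠ t, and Δ_{s,s}(x) = (ψ'(x+s))² + ψ''(x+s), for x ∈ (-α, ∞). Then Δ_{s,t} is completely monotonic on (-α, ∞) whenever |t - s| < 1 (including s = t), and -Δ_{s,t} is completely monotonic on (-α, ∞) whenever |t - s| > 1. -/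
open Real

/-- The digamma (psi) function, the derivative of `log ∘ Γ`. -/
noncomputable def digamma : ℝ → ℝ :=
  deriv fun x : ℝ => Real.log (Real.Gamma x)

/-- A function `f` is completely monotonic on a set `S` if it has derivatives of all
orders on `S` and `(-1)^n f⁽ⁿ⁾(x) ≥ 0` for all `x ∈ S` and `n ≥ 0`. -/
def CompletelyMonotonicOn (f : ℝ → ℝ) (S : Set ℝ) : Prop :=
  (∀ x ∈ S, ContDiffAt ℝ (⊤ : ℕ∞) f x) ∧ ∀ (n : ℕ), ∀ x ∈ S, 0 ≤ (-1 : ℝ) ^ n * iteratedDeriv n f x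

/-- The function `Δ_{s,t}` built from divided differences of the digamma and trigamma
functions. -/
noncomputable def Delta (s t : ℝ) : ℝ → ℝ := fun x =>
  if s = t then (deriv digamma (x + s)) ^ 2 + deriv (deriv digamma) (x + s)
  else ((digamma (x + t) - digamma (x + s)) / (t - s)) ^ 2 +
    (deriv digamma (x + t) - deriv digamma (x + s)) / (t - s)

/-!
Write `∇f x = f x - f (x + 1)`. If `f → 0` at infinity and `∇f` is completely monotonic, then so is
`f x = ∑ ∇f (x + k)`. Let `δ x` be the divided difference of `ψ` at `x + s` and `x + t`, so that
`Δ = δ² + δ'`. With `p x = 1 / ((x + s) (x + t))`, the functional equation of `Γ` gives `∇δ = p`,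
and it follows for every constant `c` that

* `∇(c Δ) = p · c u`, where `u x = 2 δ x - 1 / (x + s) - 1 / (x + t) - p x`;
* `∇(c u) x = c (1 - (t - s)²) / ((x + s) (x + s + 1) (x + t) (x + t + 1))`.

All these functions vanish at infinity, so `c Δ` is completely monotonic as soon as
`c (1 - (t - s)²) ≥ 0`; take `c = ±1`.
-/

open Set Filter Topology

lemma add_natCast_mem_Ioi {R : Type*} [Semiring R] [PartialOrder R] [IsOrderedRing R] {a x : R}
    (hx : x ∈ Ioi a) (k : ℕ) : x + k ∈ Ioi a :=
  mem_Ioi.2 (lt_add_of_lt_of_nonneg (mem_Ioi.1 hx) k.cast_nonneg)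

namespace CompletelyMonotonicOn

variable {f g : ℝ → ℝ} {S : Set ℝ} {a : ℝ}

lemma nonneg (hf : CompletelyMonotonicOn f S) {x : ℝ} (hx : x ∈ S) : 0 ≤ f x := by
  simpa using hf.2 0 x hx

lemma differentiableAt (hf : CompletelyMonotonicOn f S) {x : ℝ} (hx : x ∈ S) :
    DifferentiableAt ℝ f x :=
  (hf.1 x hx).differentiableAt (by simp)

lemma neg_deriv (hf : CompletelyMonotonicOn f S) :
    CompletelyMonotonicOn (fun x => -deriv f x) S := by
  refine ⟨fun x hx => ((hf.1 x hx).derivWithin le_rfl).neg, fun n x hx => ?_⟩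
  have h := hf.2 (n + 1) x hx
  rw [iteratedDeriv_succ', pow_succ] at h
  rw [iteratedDeriv_fun_neg]
  linarith

lemma deriv_nonpos (hf : CompletelyMonotonicOn f S) {x : ℝ} (hx : x ∈ S) : deriv f x ≤ 0 :=
  neg_nonneg.1 (hf.neg_deriv.nonneg hx)

lemma antitoneOn (hS : Convex ℝ S) (hf : CompletelyMonotonicOn f S) : AntitoneOn f S :=
  antitoneOn_of_deriv_nonpos hS
    (fun _ hx => (hf.differentiableAt hx).continuousAt.continuousWithinAt)
    (fun _ hx => (hf.differentiableAt (interior_subset hx)).differentiableWithinAt)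
    fun _ hx => hf.deriv_nonpos (interior_subset hx)

lemma convexOn (hS : Convex ℝ S) (hf : CompletelyMonotonicOn f S) : ConvexOn ℝ S f := by
  refine MonotoneOn.convexOn_of_deriv hS
    (fun _ hx => (hf.differentiableAt hx).continuousAt.continuousWithinAt)
    (fun _ hx => (hf.differentiableAt (interior_subset hx)).differentiableWithinAt) ?_
  simpa only [neg_neg] using ((hf.neg_deriv.antitoneOn hS).mono interior_subset).neg

lemma congr (hS : IsOpen S) (hf : CompletelyMonotonicOn f S) (h : EqOn g f S) :
    CompletelyMonotonicOn g S := by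
  have h' : ∀ x ∈ S, g =ᶠ[𝓝 x] f := fun x hx => h.eventuallyEq_of_mem (hS.mem_nhds hx)
  refine ⟨fun x hx => (hf.1 x hx).congr_of_eventuallyEq (h' x hx), fun n x hx => ?_⟩
  rw [(h' x hx).iteratedDeriv_eq]
  exact hf.2 n x hx

lemma const_mul {c : ℝ} (hc : 0 ≤ c) (hf : CompletelyMonotonicOn f S) :
    CompletelyMonotonicOn (fun x => c * f x) S := by
  refine ⟨fun x hx => contDiffAt_const.mul (hf.1 x hx), fun n x hx => ?_⟩
  rw [iteratedDeriv_const_mul_field, mul_left_comm]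
  exact mul_nonneg hc (hf.2 n x hx)

lemma mul (hf : CompletelyMonotonicOn f S) (hg : CompletelyMonotonicOn g S) :
    CompletelyMonotonicOn (fun x => f x * g x) S := by
  refine ⟨fun x hx => (hf.1 x hx).mul (hg.1 x hx), fun n x hx => ?_⟩
  rw [iteratedDeriv_fun_mul (contDiffAt_infty.1 (hf.1 x hx) n) (contDiffAt_infty.1 (hg.1 x hx) n),
    Finset.mul_sum]
  refine Finset.sum_nonneg fun i hi => ?_
  have hsign : (-1 : ℝ) ^ n = (-1) ^ i * (-1) ^ (n - i) := by
    rw [← pow_add, Nat.add_sub_cancel' (Finset.mem_range_succ_iff.1 hi)]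
  calc (0 : ℝ)
      ≤ n.choose i * ((-1) ^ i * iteratedDeriv i f x) *
          ((-1) ^ (n - i) * iteratedDeriv (n - i) g x) :=
        mul_nonneg (mul_nonneg (Nat.cast_nonneg _) (hf.2 i x hx)) (hg.2 (n - i) x hx)
    _ = (-1) ^ n * (n.choose i * iteratedDeriv i f x * iteratedDeriv (n - i) g x) := by
        rw [hsign]; ring

lemma inv_add_const {c : ℝ} (hS : ∀ x ∈ S, 0 < x + c) :
    CompletelyMonotonicOn (fun x => (x + c)⁻¹) S := by
  refine ⟨fun x hx => (contDiffAt_id.add contDiffAt_const).inv (hS x hx).ne', fun n x hx => ?_⟩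
  simp only [iteratedDeriv_comp_add_const n Inv.inv c, iteratedDeriv_eq_iterate, iter_deriv_inv]
  rw [← mul_assoc, ← mul_assoc, ← mul_pow, neg_one_mul, neg_neg, one_pow, one_mul]
  exact mul_nonneg (Nat.cast_nonneg _) (zpow_nonneg (hS x hx).le _)

lemma of_hasDerivAt_neg {F : ℕ → ℝ → ℝ} (hS : IsOpen S) (h0 : ∀ n, ∀ x ∈ S, 0 ≤ F n x)
    (hF : ∀ n, ∀ x ∈ S, HasDerivAt (F n) (-F (n + 1) x) x) : CompletelyMonotonicOn (F 0) S := by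
  have hiter : ∀ n, EqOn (iteratedDeriv n (F 0)) (fun x => (-1) ^ n * F n x) S := by
    intro n
    induction n with
    | zero => intro x _; simp
    | succ n ih =>
      intro x hx
      rw [iteratedDeriv_succ, (ih.eventuallyEq_of_mem (hS.mem_nhds hx)).deriv_eq,
        ((hF n x hx).const_mul _).deriv]
      ring
  refine ⟨fun x hx => ?_, fun n x hx => ?_⟩
  · refine (contDiffOn_of_differentiableOn_deriv fun n _ => ?_).contDiffAt (hS.mem_nhds hx)
    exact DifferentiableOn.congr
      (fun y hy => ((hF n y hy).const_mul _).differentiableAt.differentiableWithinAt)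
      ((iteratedDerivWithin_of_isOpen hS).trans (hiter n))
  · rw [hiter n hx, ← mul_assoc, ← mul_pow, neg_one_mul, neg_neg, one_pow, one_mul]
    exact h0 n x hx

lemma summable_neg_deriv (hf : CompletelyMonotonicOn f (Ioi a)) {x : ℝ} (hx : x ∈ Ioi a)
    (hsum : Summable fun k : ℕ => f (x + k)) : Summable fun k : ℕ => -deriv f (x + k) := by
  refine (summable_nat_add_iff 1).1 (hsum.of_nonneg_of_le
    (fun k => hf.neg_deriv.nonneg (add_natCast_mem_Ioi hx _)) fun k => ?_)
  have hk := add_natCast_mem_Ioi hx k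
  have hk1 := add_natCast_mem_Ioi hx (k + 1)
  have hslope := (hf.convexOn (convex_Ioi a)).slope_le_deriv hk hk1 (by simp)
    (hf.differentiableAt hk1)
  rw [slope_def_field, Nat.cast_succ, ← add_assoc, add_sub_cancel_left, div_one,
    add_assoc, ← Nat.cast_succ] at hslope
  linarith [hf.nonneg hk1]

lemma hasDerivAt_tsum_add_nat (hf : CompletelyMonotonicOn f (Ioi a))
    (hsum : ∀ x ∈ Ioi a, Summable fun k : ℕ => f (x + k)) {x : ℝ} (hx : x ∈ Ioi a) :
    HasDerivAt (fun y => ∑' k : ℕ, f (y + k)) (∑' k : ℕ, deriv f (x + k)) x := by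
  obtain ⟨b, hab, hbx⟩ := exists_between (mem_Ioi.1 hx)
  refine hasDerivAt_tsum_of_isPreconnected (g := fun (k : ℕ) y => f (y + k))
    (g' := fun (k : ℕ) y => deriv f (y + k)) (hf.summable_neg_deriv hab (hsum b hab))
    isOpen_Ioi isPreconnected_Ioi (fun k y hy => ?_) (fun k y hy => ?_)
    (mem_Ioi.2 hbx) (hsum x hx) (mem_Ioi.2 hbx)
  all_goals have hyk := add_natCast_mem_Ioi (Ioi_subset_Ioi hab.le hy) k
  · exact (hf.differentiableAt hyk).hasDerivAt.comp_add_const y k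
  · rw [Real.norm_of_nonpos (hf.deriv_nonpos hyk)]
    exact hf.neg_deriv.antitoneOn (convex_Ioi a) (add_natCast_mem_Ioi hab k) hyk
      (by linarith [mem_Ioi.1 hy])

lemma tsum_add_nat (hf : CompletelyMonotonicOn f (Ioi a))
    (hsum : ∀ x ∈ Ioi a, Summable fun k : ℕ => f (x + k)) :
    CompletelyMonotonicOn (fun x => ∑' k : ℕ, f (x + k)) (Ioi a) := by
  let D : ℕ → ℝ → ℝ := fun n => (fun h x => -deriv h x)^[n] f
  have hD_succ : ∀ n, D (n + 1) = fun x => -deriv (D n) x :=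
    fun n => Function.iterate_succ_apply' _ n f
  have hD : ∀ n, CompletelyMonotonicOn (D n) (Ioi a) ∧
      ∀ x ∈ Ioi a, Summable fun k : ℕ => D n (x + k) := by
    intro n
    induction n with
    | zero => exact ⟨hf, hsum⟩
    | succ n ih =>
      rw [hD_succ]
      exact ⟨ih.1.neg_deriv, fun x hx => ih.1.summable_neg_deriv hx (ih.2 x hx)⟩
  refine of_hasDerivAt_neg (F := fun n x => ∑' k : ℕ, D n (x + k)) isOpen_Ioi
    (fun n x hx => tsum_nonneg fun k => (hD n).1.nonneg (add_natCast_mem_Ioi hx k))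
    fun n x hx => ?_
  simpa only [hD_succ, tsum_neg, neg_neg] using (hD n).1.hasDerivAt_tsum_add_nat (hD n).2 hx

lemma of_sub_add_one (hg : CompletelyMonotonicOn g (Ioi a)) (hlim : Tendsto f atTop (𝓝 0))
    (h : ∀ x ∈ Ioi a, f x - f (x + 1) = g x) : CompletelyMonotonicOn f (Ioi a) := by
  have hsum : ∀ x ∈ Ioi a, HasSum (fun k : ℕ => g (x + k)) (f x) := by
    intro x hx
    have hpartial : ∀ n : ℕ, ∑ k ∈ Finset.range n, g (x + k) = f x - f (x + n) := by
      intro n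
      have := Finset.sum_range_sub' (fun k : ℕ => f (x + k)) n
      simpa only [← h _ (add_natCast_mem_Ioi hx _), Nat.cast_succ, Nat.cast_zero, add_zero,
        add_assoc] using this
    rw [hasSum_iff_tendsto_nat_of_nonneg fun k => hg.nonneg (add_natCast_mem_Ioi hx k)]
    simp only [hpartial]
    simpa using (hlim.comp (tendsto_atTop_add_const_left atTop x
      tendsto_natCast_atTop_atTop)).const_sub (f x)
  exact (hg.tsum_add_nat fun x hx => (hsum x hx).summable).congr isOpen_Ioi
    fun x hx => (hsum x hx).tsum_eq.symm

end CompletelyMonotonicOn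

section Difference

lemma dslope_add_add_of_ne {𝕜 : Type*} [NontriviallyNormedField 𝕜] {s t : 𝕜} (hst : s ≠ t)
    (f : 𝕜 → 𝕜) (x : 𝕜) :
    dslope f (x + s) (x + t) = (f (x + t) - f (x + s)) / (t - s) := by
  rw [dslope_of_ne _ (by simpa using hst.symm), slope_def_field, add_sub_add_left_eq_sub]

lemma deriv_sub_deriv_add_const {𝕜 F : Type*} [NontriviallyNormedField 𝕜]
    [NormedAddCommGroup F] [NormedSpace 𝕜 F] {f g : 𝕜 → F} {x c : 𝕜}
    (h : (fun y => f y - f (y + c)) =ᶠ[𝓝 x] g)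
    (hx : DifferentiableAt 𝕜 f x) (hxc : DifferentiableAt 𝕜 f (x + c)) :
    deriv f x - deriv f (x + c) = deriv g x := by
  rw [← h.deriv_eq]
  exact (hx.hasDerivAt.sub (hxc.hasDerivAt.comp_add_const x c)).deriv.symm

variable {f : ℝ → ℝ} {a : ℝ}

lemma tendsto_add_sub_of_monotoneOn (hf : MonotoneOn f (Ioi a))
    (h : Tendsto (fun x => f (x + 1) - f x) atTop (𝓝 0)) (s t : ℝ) :
    Tendsto (fun x => f (x + t) - f (x + s)) atTop (𝓝 0) := by
  wlog hst : s ≤ t generalizing s t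
  · simpa using (this t s (le_of_not_ge hst)).neg
  have hnat : ∀ n : ℕ, Tendsto (fun x => f (x + n) - f x) atTop (𝓝 0) := by
    intro n
    induction n with
    | zero => simp
    | succ n ih =>
      have := (h.comp (tendsto_atTop_add_const_right atTop (n : ℝ) tendsto_id)).add ih
      simpa [add_assoc] using this
  obtain ⟨n, hn⟩ := exists_nat_ge (t - s)
  have hupper : Tendsto (fun x => f (x + s + n) - f (x + s)) atTop (𝓝 0) :=
    (hnat n).comp (tendsto_atTop_add_const_right atTop s tendsto_id)
  refine squeeze_zero' ?_ ?_ hupper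
  all_goals
    filter_upwards [eventually_gt_atTop (a - s)] with x hx
    have hxs : x + s ∈ Ioi a := sub_lt_iff_lt_add.1 hx
    have hxt : x + t ∈ Ioi a := mem_Ioi.2 (by linarith [mem_Ioi.1 hxs])
  · exact sub_nonneg.2 (hf hxs hxt (by linarith))
  · exact sub_le_sub_right (hf hxt (mem_Ioi.2 (by linarith [mem_Ioi.1 hxt])) (by linarith)) _

lemma tendsto_deriv_of_convexOn {l : ℝ} (hf : ConvexOn ℝ (Ioi a) f)
    (hdiff : ∀ x ∈ Ioi a, DifferentiableAt ℝ f x)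
    (h : Tendsto (fun x => f (x + 1) - f x) atTop (𝓝 l)) : Tendsto (deriv f) atTop (𝓝 l) := by
  have hprev := h.comp (tendsto_atTop_add_const_right atTop (-1) tendsto_id)
  refine tendsto_of_tendsto_of_tendsto_of_le_of_le' hprev h ?_ ?_
  all_goals
    filter_upwards [eventually_gt_atTop (a + 1)] with x hx
    have hxa : x ∈ Ioi a := by grind
  · have hslope := hf.slope_le_deriv (x := x - 1) (by grind) hxa (by simp) (hdiff x hxa)
    simpa [slope_def_field, sub_eq_add_neg] using hslope
  · have hslope := hf.deriv_le_slope (y := x + 1) hxa (by grind) (by simp) (hdiff x hxa)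
    simpa [slope_def_field] using hslope

end Difference

section Digamma

variable {x s t : ℝ}

lemma contDiffAt_log_Gamma (hx : 0 < x) :
    ContDiffAt ℝ (⊤ : ℕ∞) (fun y => Real.log (Real.Gamma y)) x := by
  have hopen : IsOpen {z : ℂ | 0 < z.re} := isOpen_lt continuous_const Complex.continuous_re
  have hΓ : DifferentiableOn ℂ Complex.Gamma {z | 0 < z.re} := fun z hz =>
    (Complex.differentiableAt_Gamma z fun m hm => by
      have : z.re ≤ 0 := by simp [hm]
      exact this.not_gt hz).differentiableWithinAt
  exact ((hΓ.analyticAt (hopen.mem_nhds (by simpa))).contDiffAt.real_of_complex).log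
    (Real.Gamma_pos_of_pos hx).ne'

lemma differentiableAt_log_Gamma (hx : 0 < x) :
    DifferentiableAt ℝ (fun y => Real.log (Real.Gamma y)) x :=
  (contDiffAt_log_Gamma hx).differentiableAt (by simp)

lemma differentiableAt_digamma (hx : 0 < x) : DifferentiableAt ℝ digamma x :=
  ((contDiffAt_log_Gamma hx).derivWithin (m := (⊤ : ℕ∞)) le_rfl).differentiableAt (by simp)

lemma monotoneOn_digamma : MonotoneOn digamma (Ioi 0) :=
  Real.convexOn_log_Gamma.monotoneOn_deriv fun _ hx => differentiableAt_log_Gamma hx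

lemma digamma_sub_digamma_add_one (hx : 0 < x) : digamma x - digamma (x + 1) = -x⁻¹ := by
  have hlog : (fun y => Real.log (Real.Gamma y) - Real.log (Real.Gamma (y + 1))) =ᶠ[𝓝 x]
      fun y => -Real.log y := by
    filter_upwards [lt_mem_nhds hx] with y hy
    rw [Real.Gamma_add_one hy.ne', Real.log_mul hy.ne' (Real.Gamma_pos_of_pos hy).ne']
    ring
  rw [digamma, deriv_sub_deriv_add_const hlog (differentiableAt_log_Gamma hx)
    (differentiableAt_log_Gamma (by positivity))]
  exact (Real.hasDerivAt_log hx.ne').neg.deriv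

lemma tendsto_digamma_add_sub (s t : ℝ) :
    Tendsto (fun x => digamma (x + t) - digamma (x + s)) atTop (𝓝 0) := by
  refine tendsto_add_sub_of_monotoneOn monotoneOn_digamma ?_ s t
  refine tendsto_inv_atTop_zero.congr' ?_
  filter_upwards [eventually_gt_atTop 0] with x hx
  linarith [digamma_sub_digamma_add_one hx]

lemma dslope_digamma_sub_dslope_digamma_add_one (hs : 0 < x + s) (ht : 0 < x + t) :
    dslope digamma (x + s) (x + t) - dslope digamma (x + 1 + s) (x + 1 + t) =
      (x + s)⁻¹ * (x + t)⁻¹ := by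
  rcases eq_or_ne s t with rfl | hst
  · have hpsi : (fun y => digamma y - digamma (y + 1)) =ᶠ[𝓝 (x + s)] fun y => -y⁻¹ := by
      filter_upwards [lt_mem_nhds hs] with y hy using digamma_sub_digamma_add_one hy
    rw [dslope_same, dslope_same, add_right_comm,
      deriv_sub_deriv_add_const hpsi (differentiableAt_digamma hs)
        (differentiableAt_digamma (by positivity)),
      (hasDerivAt_inv hs.ne').fun_neg.deriv, neg_neg, sq, mul_inv]
  · have hst' : t - s ≠ 0 := sub_ne_zero.2 hst.symm
    have hs1 := digamma_sub_digamma_add_one hs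
    have ht1 := digamma_sub_digamma_add_one ht
    rw [add_right_comm] at hs1 ht1
    rw [dslope_add_add_of_ne hst, dslope_add_add_of_ne hst, ← sub_div, sub_sub_sub_comm, hs1, ht1]
    field_simp
    ring

lemma add_pos_of_neg_min_lt (hx : x ∈ Ioi (-min s t)) : 0 < x + s ∧ 0 < x + t := by
  grind

lemma completelyMonotonicOn_inv_add_mul_inv_add (s t : ℝ) :
    CompletelyMonotonicOn (fun x => (x + s)⁻¹ * (x + t)⁻¹) (Ioi (-min s t)) :=
  (CompletelyMonotonicOn.inv_add_const fun _ hx => (add_pos_of_neg_min_lt hx).1).mul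
    (CompletelyMonotonicOn.inv_add_const fun _ hx => (add_pos_of_neg_min_lt hx).2)

lemma completelyMonotonicOn_dslope_digamma_of_tendsto
    (h : Tendsto (fun x => dslope digamma (x + s) (x + t)) atTop (𝓝 0)) :
    CompletelyMonotonicOn (fun x => dslope digamma (x + s) (x + t)) (Ioi (-min s t)) :=
  (completelyMonotonicOn_inv_add_mul_inv_add s t).of_sub_add_one h fun _ hx =>
    dslope_digamma_sub_dslope_digamma_add_one (add_pos_of_neg_min_lt hx).1
      (add_pos_of_neg_min_lt hx).2

lemma tendsto_dslope_digamma_of_ne (hst : s ≠ t) :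
    Tendsto (fun x => dslope digamma (x + s) (x + t)) atTop (𝓝 0) := by
  have hslope := (tendsto_digamma_add_sub s t).div_const (t - s)
  rw [zero_div] at hslope
  exact hslope.congr fun x => (dslope_add_add_of_ne hst digamma x).symm

lemma concaveOn_digamma : ConcaveOn ℝ (Ioi 0) digamma := by
  refine AntitoneOn.concaveOn_of_deriv (convex_Ioi 0)
    (fun x hx => (differentiableAt_digamma hx).continuousAt.continuousWithinAt)
    (fun x hx => (differentiableAt_digamma (interior_subset hx)).differentiableWithinAt) ?_
  rw [interior_Ioi]
  intro x hx y hy hxy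
  -- For `h > 0` the slope `(ψ (x + h) - ψ x) / h` is completely monotonic, hence antitone, in `x`.
  refine le_of_tendsto_of_tendsto (differentiableAt_digamma hy).hasDerivAt.tendsto_slope_zero_right
    (differentiableAt_digamma hx).hasDerivAt.tendsto_slope_zero_right ?_
  filter_upwards [self_mem_nhdsWithin] with h hh
  have hh0 : (0 : ℝ) < h := hh
  have hanti := (completelyMonotonicOn_dslope_digamma_of_tendsto
    (tendsto_dslope_digamma_of_ne hh0.ne)).antitoneOn (convex_Ioi _)
    (a := x) (by grind) (b := y) (by grind) hxy
  simpa [dslope_of_ne, slope_def_field, hh0.ne', div_eq_inv_mul] using hanti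

lemma tendsto_deriv_digamma : Tendsto (deriv digamma) atTop (𝓝 0) := by
  have h := tendsto_deriv_of_convexOn concaveOn_digamma.neg
    (fun x hx => (differentiableAt_digamma hx).neg) (l := 0) ?_
  · simpa [deriv.neg'] using h.neg
  · simpa [neg_add_eq_sub] using tendsto_digamma_add_sub 1 0

lemma tendsto_dslope_digamma (s t : ℝ) :
    Tendsto (fun x => dslope digamma (x + s) (x + t)) atTop (𝓝 0) := by
  rcases eq_or_ne s t with rfl | hst
  · simp only [dslope_same]
    exact tendsto_deriv_digamma.comp (tendsto_atTop_add_const_right atTop s tendsto_id)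
  · exact tendsto_dslope_digamma_of_ne hst

end Digamma

section Delta

variable {s t c : ℝ} {δ : ℝ → ℝ}

lemma tendsto_inv_add_const_atTop (s : ℝ) : Tendsto (fun x : ℝ => (x + s)⁻¹) atTop (𝓝 0) :=
  tendsto_inv_atTop_zero.comp (tendsto_atTop_add_const_right atTop s tendsto_id)

lemma completelyMonotonicOn_two_mul_sub_inv_add (hc : 0 ≤ c * (1 - (t - s) ^ 2))
    (hlim : Tendsto δ atTop (𝓝 0))
    (hδ : ∀ x ∈ Ioi (-min s t), δ x - δ (x + 1) = (x + s)⁻¹ * (x + t)⁻¹) :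
    CompletelyMonotonicOn
      (fun x => c * (2 * δ x - ((x + s)⁻¹ + (x + t)⁻¹ + (x + s)⁻¹ * (x + t)⁻¹)))
      (Ioi (-min s t)) := by
  have hkernel := (completelyMonotonicOn_inv_add_mul_inv_add s t).mul
    ((CompletelyMonotonicOn.inv_add_const (c := s + 1) fun x hx => by
        linarith [(add_pos_of_neg_min_lt hx).1]).mul
      (CompletelyMonotonicOn.inv_add_const (c := t + 1) fun x hx => by
        linarith [(add_pos_of_neg_min_lt hx).2]))
  refine (hkernel.const_mul hc).of_sub_add_one ?_ fun x hx => ?_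
  · have hs := tendsto_inv_add_const_atTop s
    have ht := tendsto_inv_add_const_atTop t
    simpa using ((hlim.const_mul 2).sub ((hs.add ht).add (hs.mul ht))).const_mul c
  · obtain ⟨hs, ht⟩ := add_pos_of_neg_min_lt hx
    have hs1 : x + s + 1 ≠ 0 := by positivity
    have ht1 : x + t + 1 ≠ 0 := by positivity
    rw [← sub_sub_self (δ x) (δ (x + 1)), hδ x hx, add_right_comm x 1 s, add_right_comm x 1 t,
      ← add_assoc, ← add_assoc]
    field_simp
    ring

lemma completelyMonotonicOn_sq_add_deriv (hc : 0 ≤ c * (1 - (t - s) ^ 2))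
    (hlim : Tendsto δ atTop (𝓝 0))
    (hδ : ∀ x ∈ Ioi (-min s t), δ x - δ (x + 1) = (x + s)⁻¹ * (x + t)⁻¹) :
    CompletelyMonotonicOn (fun x => c * (δ x ^ 2 + deriv δ x)) (Ioi (-min s t)) := by
  have hp := completelyMonotonicOn_inv_add_mul_inv_add s t
  have hδ_cm : CompletelyMonotonicOn δ (Ioi (-min s t)) := hp.of_sub_add_one hlim hδ
  have hlim' : Tendsto (deriv δ) atTop (𝓝 0) := by
    refine tendsto_deriv_of_convexOn (hδ_cm.convexOn (convex_Ioi _))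
      (fun x hx => hδ_cm.differentiableAt hx) ?_
    simpa using (hlim.comp (tendsto_atTop_add_const_right atTop 1 tendsto_id)).sub hlim
  have hu := completelyMonotonicOn_two_mul_sub_inv_add hc hlim hδ
  refine (hp.mul hu).of_sub_add_one ?_ fun x hx => ?_
  · simpa using ((hlim.pow 2).add hlim').const_mul c
  · obtain ⟨hs, ht⟩ := add_pos_of_neg_min_lt hx
    have hderiv : deriv δ x - deriv δ (x + 1) =
        -((x + s)⁻¹ * (x + t)⁻¹ * ((x + s)⁻¹ + (x + t)⁻¹)) := by
      rw [deriv_sub_deriv_add_const (eventually_of_mem (isOpen_Ioi.mem_nhds hx) hδ)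
        (hδ_cm.differentiableAt hx)
        (hδ_cm.differentiableAt (mem_Ioi.2 (by linarith [mem_Ioi.1 hx])))]
      refine HasDerivAt.deriv (((((hasDerivAt_id x).add_const s).inv hs.ne').mul
        (((hasDerivAt_id x).add_const t).inv ht.ne')).congr_deriv ?_)
      simp only [id, Pi.inv_apply]
      field_simp
      ring
    linear_combination c * hderiv + c * (δ x + δ (x + 1)) * hδ x hx
      - c * (x + s)⁻¹ * (x + t)⁻¹ * hδ x hx

lemma eqOn_Delta_sq_add_deriv (s t : ℝ) :
    EqOn (Delta s t) (fun x => dslope digamma (x + s) (x + t) ^ 2 +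
      deriv (fun y => dslope digamma (y + s) (y + t)) x) (Ioi (-min s t)) := by
  intro x hx
  obtain ⟨hs, ht⟩ := add_pos_of_neg_min_lt hx
  rcases eq_or_ne s t with rfl | hst
  · simp [Delta, deriv_comp_add_const]
  · have hderiv := (((differentiableAt_digamma ht).hasDerivAt.comp_add_const x t).sub
      ((differentiableAt_digamma hs).hasDerivAt.comp_add_const x s)).div_const (t - s)
    simp only [Delta, if_neg hst, dslope_add_add_of_ne hst]
    rw [← hderiv.deriv]
    rfl

lemma completelyMonotonicOn_const_mul_Delta (hc : 0 ≤ c * (1 - (t - s) ^ 2)) :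
    CompletelyMonotonicOn (fun x => c * Delta s t x) (Ioi (-min s t)) :=
  (completelyMonotonicOn_sq_add_deriv hc (tendsto_dslope_digamma s t) fun _ hx =>
    dslope_digamma_sub_dslope_digamma_add_one (add_pos_of_neg_min_lt hx).1
      (add_pos_of_neg_min_lt hx).2).congr isOpen_Ioi fun _ hx =>
    congrArg (c * ·) (eqOn_Delta_sq_add_deriv s t hx)

end Delta

theorem qi_complete_monotonicity (s t : ℝ) :
    (|t - s| < 1 → CompletelyMonotonicOn (Delta s t) (Set.Ioi (-(min s t)))) ∧
      (1 < |t - s| →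
        CompletelyMonotonicOn (fun x => -(Delta s t x)) (Set.Ioi (-(min s t)))) := by
  refine ⟨fun h => ?_, fun h => ?_⟩
  · have hsq := (sq_lt_one_iff_abs_lt_one (t - s)).2 h
    simpa using completelyMonotonicOn_const_mul_Delta (c := 1) (by linarith)
  · have hsq := (one_lt_sq_iff_one_lt_abs (t - s)).2 h
    simpa using completelyMonotonicOn_const_mul_Delta (c := -1) (by linarith)
end
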